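/- (Proposition 4.4) For every local compass graph ⟨D,L⟩ there is a construction G such that λ(G)=⟨D,L⟩. -/

import Mathlib

namespace PluralCuts

/-- The two horizontal directions: west and east. -/
inductive XDir : Type
  | W
  | E
deriving DecidableEq

/-- The two vertical directions: north and south. -/
inductive YDir : Type
  | N
  | S
deriving DecidableEq

/-- The other element of `{W, E}`. -/
def XDir.other : XDir → XDir
  | .W => .E
  | .E => .W

/-- A helper choosing between two values according to an `XDir`. -/
def pick {α : Type*} (w e : α) : XDir → α
  | .W => w
  | .E => e

/-- A digraph on (a finite set of) natural-number vertices: a finite set of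
vertices together with a finite set of edges (ordered pairs). -/
structure DG : Type where
  verts : Finset ℕ
  edges : Finset (ℕ × ℕ)

namespace DG

/-- `D` is an oriented graph: edges lie between vertices, the edge relation is
irreflexive and antisymmetric, and the vertex set is nonempty. -/
def IsOriented (D : DG) : Prop :=
  (∀ e ∈ D.edges, e.1 ∈ D.verts ∧ e.2 ∈ D.verts) ∧
  (∀ e ∈ D.edges, e.1 ≠ e.2) ∧
  (∀ a b : ℕ, (a, b) ∈ D.edges → (b, a) ∉ D.edges) ∧
  D.verts.Nonempty

/-- A `W`-vertex: no edge ends in it. -/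
def isWVert (D : DG) (a : ℕ) : Prop := a ∈ D.verts ∧ ∀ b, (b, a) ∉ D.edges

/-- An `E`-vertex: no edge begins in it. -/
def isEVert (D : DG) (a : ℕ) : Prop := a ∈ D.verts ∧ ∀ b, (a, b) ∉ D.edges

/-- An inner vertex: some edge ends in it and some edge begins in it. -/
def isInner (D : DG) (a : ℕ) : Prop :=
  a ∈ D.verts ∧ (∃ b, (b, a) ∈ D.edges) ∧ (∃ b, (a, b) ∈ D.edges)

/-- A `W`-edge: an edge beginning in a `W`-vertex. -/
def isWEdge (D : DG) (e : ℕ × ℕ) : Prop := e ∈ D.edges ∧ D.isWVert e.1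

/-- An `E`-edge: an edge ending in an `E`-vertex. -/
def isEEdge (D : DG) (e : ℕ × ℕ) : Prop := e ∈ D.edges ∧ D.isEVert e.2

/-- An `X`-edge, for `X ∈ {W, E}`. -/
def isXEdge (D : DG) : XDir → (ℕ × ℕ) → Prop
  | .W => D.isWEdge
  | .E => D.isEEdge

/-- An inner edge: it begins and ends in inner vertices. -/
def isInnerEdge (D : DG) (e : ℕ × ℕ) : Prop :=
  e ∈ D.edges ∧ D.isInner e.1 ∧ D.isInner e.2

/-- A functional `W`-edge `(a,b)`: `(a,c) ∈ D` implies `b = c`. -/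
def funcWEdge (D : DG) (e : ℕ × ℕ) : Prop :=
  D.isWEdge e ∧ ∀ c, (e.1, c) ∈ D.edges → c = e.2

/-- A functional `E`-edge `(b,a)`: `(c,a) ∈ D` implies `b = c`. -/
def funcEEdge (D : DG) (e : ℕ × ℕ) : Prop :=
  D.isEEdge e ∧ ∀ c, (c, e.2) ∈ D.edges → c = e.1

/-- `D` is `W`-`E`-functional: all its `W`-edges and `E`-edges are functional. -/
def WEFunctional (D : DG) : Prop :=
  (∀ e, D.isWEdge e → D.funcWEdge e) ∧ (∀ e, D.isEEdge e → D.funcEEdge e)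

/-- Semi-adjacency: `(a,b)` or `(b,a)` is an edge. -/
def semiAdj (D : DG) (a b : ℕ) : Prop := (a, b) ∈ D.edges ∨ (b, a) ∈ D.edges

/-- A semipath: a nonempty sequence of mutually distinct vertices in which any
two consecutive vertices are semi-adjacent. -/
def IsSemipath (D : DG) (l : List ℕ) : Prop :=
  l ≠ [] ∧ (∀ a ∈ l, a ∈ D.verts) ∧ l.Nodup ∧ l.Chain' D.semiAdj

/-- A path: a nonempty sequence of mutually distinct vertices in which
`(a_i, a_{i+1})` is an edge for consecutive vertices. -/
def IsPath (D : DG) (l : List ℕ) : Prop :=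
  l ≠ [] ∧ (∀ a ∈ l, a ∈ D.verts) ∧ l.Nodup ∧
    l.Chain' (fun a b => (a, b) ∈ D.edges)

/-- A semicycle: a sequence `a_1, ..., a_n` of vertices with `n ≥ 4`,
`a_1 = a_n`, `a_1, ..., a_{n-1}` mutually distinct, and consecutive vertices
semi-adjacent. -/
def IsSemicycle (D : DG) (l : List ℕ) : Prop :=
  4 ≤ l.length ∧ (∀ a ∈ l, a ∈ D.verts) ∧ l.head? = l.getLast? ∧
  l.dropLast.Nodup ∧ l.Chain' D.semiAdj

/-- `D` is weakly connected: every two vertices are joined by a semipath. -/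
def WeaklyConnected (D : DG) : Prop :=
  ∀ a ∈ D.verts, ∀ b ∈ D.verts,
    ∃ l, D.IsSemipath l ∧ l.head? = some a ∧ l.getLast? = some b

/-- `D` is asemicyclic: it has no semicycles. -/
def Asemicyclic (D : DG) : Prop := ∀ l, ¬ D.IsSemicycle l

/-- The cut `D_W[e_W - e_E]D_E`:
`(D_W - {e_W}) ∪ (D_E - {e_E}) ∪ {(e_W.1, e_E.2)}` on the union of the vertex
sets with `e_W.2` and `e_E.1` omitted. -/
def cut (DW DE : DG) (eW eE : ℕ × ℕ) : DG where
  verts := (DW.verts ∪ DE.verts) \ {eW.2, eE.1}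
  edges := insert (eW.1, eE.2) ((DW.edges.erase eW) ∪ (DE.edges.erase eE))

end DG

/-- The type of assignments of four distinguished edges `NW, SW, NE, SE`. -/
abbrev DistE : Type := YDir → XDir → ℕ × ℕ

/-- The type of labellings assigning to (inner) vertices four edges. -/
abbrev Lab : Type := ℕ → YDir → XDir → ℕ × ℕ

/-- `⟨D, ε⟩` is a basic K-graph: `D` is an oriented graph with a single inner
vertex `b`, all edges begin or end in `b`, every other vertex is joined to `b`
by an edge, there is at least one edge ending in `b` and one beginning in `b`,
the distinguished edges `ε Y W` end in `b` and `ε Y E` begin in `b`, and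
(XYB): if there are at least two `X`-edges then `NX ≠ SX`. -/
def IsBasicK (D : DG) (ε : DistE) : Prop :=
  D.IsOriented ∧
  ∃ b ∈ D.verts,
    (∀ e ∈ D.edges, e.1 = b ∨ e.2 = b) ∧
    (∀ v ∈ D.verts, v = b ∨ (v, b) ∈ D.edges ∨ (b, v) ∈ D.edges) ∧
    (∃ a, (a, b) ∈ D.edges) ∧ (∃ c, (b, c) ∈ D.edges) ∧
    (∀ Y : YDir, ε Y XDir.W ∈ D.edges ∧ (ε Y XDir.W).2 = b ∧
      ε Y XDir.E ∈ D.edges ∧ (ε Y XDir.E).1 = b) ∧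
    (2 ≤ (D.edges.filter (fun e => e.2 = b)).card →
      ε YDir.N XDir.W ≠ ε YDir.S XDir.W) ∧
    (2 ≤ (D.edges.filter (fun e => e.1 = b)).card →
      ε YDir.N XDir.E ≠ ε YDir.S XDir.E)

/-- `⟨D, ε⟩` is a basic Q-graph: as a basic K-graph but with no requirement
(XYB) on the distinguished edges. -/
def IsBasicQ (D : DG) (ε : DistE) : Prop :=
  D.IsOriented ∧
  ∃ b ∈ D.verts,
    (∀ e ∈ D.edges, e.1 = b ∨ e.2 = b) ∧
    (∀ v ∈ D.verts, v = b ∨ (v, b) ∈ D.edges ∨ (b, v) ∈ D.edges) ∧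
    (∃ a, (a, b) ∈ D.edges) ∧ (∃ c, (b, c) ∈ D.edges) ∧
    (∀ Y : YDir, ε Y XDir.W ∈ D.edges ∧ (ε Y XDir.W).2 = b ∧
      ε Y XDir.E ∈ D.edges ∧ (ε Y XDir.E).1 = b)

/-- Finite binary trees whose nodes carry an oriented graph, four
distinguished edges, and (at internal nodes) the two cut edges. -/
inductive CTree : Type
  | leaf (D : DG) (ε : DistE)
  | node (D : DG) (ε : DistE) (eW eE : ℕ × ℕ) (l r : CTree)

namespace CTree

/-- The graph at the root of the tree. -/
def rootGraph : CTree → DG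
  | .leaf D _ => D
  | .node D _ _ _ _ _ => D

/-- The distinguished edges at the root of the tree. -/
def dist : CTree → DistE
  | .leaf _ ε => ε
  | .node _ ε _ _ _ _ => ε

/-- The list of graphs-with-distinguished-edges at the leaves of the tree
(the basic K-graphs determining the leaves of a construction). -/
def leaves : CTree → List (DG × DistE)
  | .leaf D ε => [(D, ε)]
  | .node _ _ _ _ l r => l.leaves ++ r.leaves

end CTree

/-- The tree `G_W[e_W - e_E]G_E`, whose root graph is the cut of the root
graphs and whose distinguished edges are given by (XYD). -/
def mkNode (GW GE : CTree) (eW eE : ℕ × ℕ) : CTree :=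
  .node (DG.cut GW.rootGraph GE.rootGraph eW eE)
    (fun Y X =>
      match X with
      | .W => if eE = GE.dist Y XDir.W then GW.dist Y XDir.W else GE.dist Y XDir.W
      | .E => if eW = GW.dist Y XDir.E then GE.dist Y XDir.E else GW.dist Y XDir.E)
    eW eE GW GE

/-- The inductive notion of construction (of a global K-graph). -/
inductive IsConstruction : CTree → Prop
  | leaf (D : DG) (ε : DistE) (h : IsBasicK D ε) : IsConstruction (.leaf D ε)
  | node (D : DG) (ε : DistE) (eW eE : ℕ × ℕ) (GW GE : CTree)
      (hW : IsConstruction GW) (hE : IsConstruction GE)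
      (hdisj : Disjoint GW.rootGraph.verts GE.rootGraph.verts)
      (heW : GW.rootGraph.funcEEdge eW)
      (heE : GE.rootGraph.funcWEdge eE)
      (hD : D = DG.cut GW.rootGraph GE.rootGraph eW eE)
      (hXYC : ∀ Y : YDir, eW = GW.dist Y XDir.E ∨ eE = GE.dist Y XDir.W)
      (hεW : ∀ Y : YDir, ε Y XDir.W =
        if eE = GE.dist Y XDir.W then GW.dist Y XDir.W else GE.dist Y XDir.W)
      (hεE : ∀ Y : YDir, ε Y XDir.E =
        if eW = GW.dist Y XDir.E then GE.dist Y XDir.E else GW.dist Y XDir.E) :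
      IsConstruction (.node D ε eW eE GW GE)

/-- The inductive notion of construction of a global Q-graph: as
`IsConstruction` but with basic Q-graphs at the leaves. -/
inductive IsConstructionQ : CTree → Prop
  | leaf (D : DG) (ε : DistE) (h : IsBasicQ D ε) : IsConstructionQ (.leaf D ε)
  | node (D : DG) (ε : DistE) (eW eE : ℕ × ℕ) (GW GE : CTree)
      (hW : IsConstructionQ GW) (hE : IsConstructionQ GE)
      (hdisj : Disjoint GW.rootGraph.verts GE.rootGraph.verts)
      (heW : GW.rootGraph.funcEEdge eW)
      (heE : GE.rootGraph.funcWEdge eE)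
      (hD : D = DG.cut GW.rootGraph GE.rootGraph eW eE)
      (hXYC : ∀ Y : YDir, eW = GW.dist Y XDir.E ∨ eE = GE.dist Y XDir.W)
      (hεW : ∀ Y : YDir, ε Y XDir.W =
        if eE = GE.dist Y XDir.W then GW.dist Y XDir.W else GE.dist Y XDir.W)
      (hεE : ∀ Y : YDir, ε Y XDir.E =
        if eW = GW.dist Y XDir.E then GE.dist Y XDir.E else GW.dist Y XDir.E) :
      IsConstructionQ (.node D ε eW eE GW GE)

/-- ρ-equivalence of constructions: the least equivalence relation containing
ρ1, ρ2, ρ3 and closed under congruence with respect to cuts. -/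
inductive RhoEquiv : CTree → CTree → Prop
  | rho1 (P Q R : CTree) (eW eE fW fE : ℕ × ℕ)
      (hP : IsConstruction P) (hQ : IsConstruction Q) (hR : IsConstruction R)
      (heW : P.rootGraph.isEEdge eW) (hfW : Q.rootGraph.isEEdge fW)
      (heE : Q.rootGraph.isWEdge eE) (hfE : R.rootGraph.isWEdge fE)
      (h1 : IsConstruction (mkNode (mkNode P Q eW eE) R fW fE))
      (h2 : IsConstruction (mkNode P (mkNode Q R fW fE) eW eE)) :
      RhoEquiv (mkNode (mkNode P Q eW eE) R fW fE)
               (mkNode P (mkNode Q R fW fE) eW eE)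
  | rho2 (P Q R : CTree) (eW eE fW fE : ℕ × ℕ)
      (hP : IsConstruction P) (hQ : IsConstruction Q) (hR : IsConstruction R)
      (heW : P.rootGraph.isEEdge eW) (hfW : P.rootGraph.isEEdge fW)
      (hne : eW ≠ fW)
      (heE : Q.rootGraph.isWEdge eE) (hfE : R.rootGraph.isWEdge fE)
      (h1 : IsConstruction (mkNode (mkNode P Q eW eE) R fW fE))
      (h2 : IsConstruction (mkNode (mkNode P R fW fE) Q eW eE)) :
      RhoEquiv (mkNode (mkNode P Q eW eE) R fW fE)
               (mkNode (mkNode P R fW fE) Q eW eE)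
  | rho3 (P Q R : CTree) (eW eE fW fE : ℕ × ℕ)
      (hP : IsConstruction P) (hQ : IsConstruction Q) (hR : IsConstruction R)
      (heE : P.rootGraph.isWEdge eE) (hfE : P.rootGraph.isWEdge fE)
      (hne : eE ≠ fE)
      (heW : Q.rootGraph.isEEdge eW) (hfW : R.rootGraph.isEEdge fW)
      (h1 : IsConstruction (mkNode R (mkNode Q P eW eE) fW fE))
      (h2 : IsConstruction (mkNode Q (mkNode R P fW fE) eW eE)) :
      RhoEquiv (mkNode R (mkNode Q P eW eE) fW fE)
               (mkNode Q (mkNode R P fW fE) eW eE)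
  | congr (G1 G2 H1 H2 : CTree) (eW eE : ℕ × ℕ)
      (h12 : RhoEquiv G1 G2) (h34 : RhoEquiv H1 H2)
      (hc1 : IsConstruction (mkNode G1 H1 eW eE))
      (hc2 : IsConstruction (mkNode G2 H2 eW eE)) :
      RhoEquiv (mkNode G1 H1 eW eE) (mkNode G2 H2 eW eE)
  | refl (G : CTree) (h : IsConstruction G) : RhoEquiv G G
  | symm {G H : CTree} (h : RhoEquiv G H) : RhoEquiv H G
  | trans {G H K : CTree} (h1 : RhoEquiv G H) (h2 : RhoEquiv H K) :
      RhoEquiv G K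

/-- The class `[G]`: all constructions with the same root graph as `G` whose
leaves are determined by the same basic K-graphs as those of `G`. -/
def classOf (G : CTree) : Set CTree :=
  {H | IsConstruction H ∧ H.rootGraph = G.rootGraph ∧
    ∀ p : DG × DistE, p ∈ H.leaves ↔ p ∈ G.leaves}

/-- Renaming the vertices of a digraph along a function. -/
def DG.rename (f : ℕ → ℕ) (D : DG) : DG where
  verts := D.verts.image f
  edges := D.edges.image (fun e => (f e.1, f e.2))

/-- Renaming the vertices throughout a tree. -/
def CTree.rename (f : ℕ → ℕ) : CTree → CTree
  | .leaf D ε => .leaf (DG.rename f D) (fun Y X => (f (ε Y X).1, f (ε Y X).2))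
  | .node D ε eW eE l r =>
      .node (DG.rename f D) (fun Y X => (f (ε Y X).1, f (ε Y X).2))
        (f eW.1, f eW.2) (f eE.1, f eE.2) (l.rename f) (r.rename f)

/-- σ-equivalence: `H` is obtained from `G` by a bijective renaming of
vertices that fixes the root vertices (so only secondary vertices may be
renamed). -/
def SigmaEquiv (G H : CTree) : Prop :=
  ∃ f : ℕ ≃ ℕ, (∀ v ∈ G.rootGraph.verts, f v = v) ∧ H = G.rename f

/-- The global compass graph `‖G‖`: all constructions σ-equivalent to a
construction in `[G]`. -/
def normClass (G : CTree) : Set CTree :=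
  {H | ∃ K ∈ classOf G, SigmaEquiv K H}

/-- The labelling `L` of `λ(G) = ⟨D, L⟩`, defined by induction on `G`: at a
leaf given by a basic K-graph with inner vertex `b`, `YX(b) = YX(B)`; at a
node, the value is inherited from the appropriate subtree unless it is one of
the two cut edges, in which case it is the new edge introduced by the cut. -/
def lamG : CTree → Lab
  | .leaf _ ε => fun _ => ε
  | .node _ _ eW eE l r => fun a Y X =>
      let v := if a ∈ l.rootGraph.verts then lamG l a Y X else lamG r a Y X
      if v = eW ∨ v = eE then (eW.1, eE.2) else v

/-- `L` assigns to every inner vertex `a` edges `L a Y W` ending in `a` and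
edges `L a Y E` beginning in `a`. -/
def ProperLab (D : DG) (L : Lab) : Prop :=
  ∀ a, D.isInner a → ∀ Y : YDir,
    L a Y XDir.W ∈ D.edges ∧ (L a Y XDir.W).2 = a ∧
    L a Y XDir.E ∈ D.edges ∧ (L a Y XDir.E).1 = a

/-- `⟨D, L⟩` separates `N` from `S`. -/
def SeparatesNS (D : DG) (L : Lab) : Prop :=
  ∀ a, D.isInner a →
    (2 ≤ (D.edges.filter (fun e => e.2 = a)).card →
      L a YDir.N XDir.W ≠ L a YDir.S XDir.W) ∧
    (2 ≤ (D.edges.filter (fun e => e.1 = a)).card →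
      L a YDir.N XDir.E ≠ L a YDir.S XDir.E)

/-- A list `a_1, ..., a_n` is `Y`-decent in `⟨D, L⟩`: `n = 1`, or
`YE(a_1) = (a_1, a_2)`, or `YW(a_n) = (a_{n-1}, a_n)`. -/
def Ydecent (L : Lab) (Y : YDir) (l : List ℕ) : Prop :=
  ∀ a b t, l = a :: b :: t →
    (L a Y XDir.E = (a, b) ∨
      ∃ c d t', l.reverse = d :: c :: t' ∧ L d Y XDir.W = (c, d))

/-- `⟨D, L⟩` is a local compass graph. -/
def IsLocalCompass (D : DG) (L : Lab) : Prop :=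
  D.IsOriented ∧ ProperLab D L ∧
  D.WeaklyConnected ∧ D.Asemicyclic ∧ D.WEFunctional ∧ (∃ a, D.isInner a) ∧
  SeparatesNS D L ∧
  (∀ l, D.IsPath l → Ydecent L YDir.N l ∧ Ydecent L YDir.S l)

/-- A path (list) covers an edge `g` when `g` is a pair of consecutive
vertices of the list. -/
def covers (l : List ℕ) (g : ℕ × ℕ) : Prop := g ∈ l.zip l.tail

/-- A `YX`-edge in `⟨D, L⟩`. -/
def YXedge (D : DG) (L : Lab) (Y : YDir) : XDir → (ℕ × ℕ) → Prop
  | .W, g => g ∈ D.edges ∧ (L g.2 Y XDir.W = g ∨ D.isEEdge g)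
  | .E, g => g ∈ D.edges ∧ (L g.1 Y XDir.E = g ∨ D.isWEdge g)

/-- A proper semipath: a semipath such that neither it nor its reverse is a
path. -/
def ProperSemipath (D : DG) (l : List ℕ) : Prop :=
  D.IsSemipath l ∧ ¬ D.IsPath l ∧ ¬ D.IsPath l.reverse

/-- A transversal edge `(a,b)`: there is a proper semipath beginning with
`a, b` and a proper semipath beginning with `b, a`. -/
def Transversal (D : DG) (e : ℕ × ℕ) : Prop :=
  e ∈ D.edges ∧
  (∃ t, ProperSemipath D (e.1 :: e.2 :: t)) ∧
  (∃ t, ProperSemipath D (e.2 :: e.1 :: t))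

/-- The edge of `D` that connects two semi-adjacent vertices `a` and `b`. -/
def connEdge (D : DG) (a b : ℕ) : ℕ × ℕ :=
  if (a, b) ∈ D.edges then (a, b) else (b, a)

/-- The connecting edges of a list: the edges connecting its consecutive
vertices. -/
def connEdges (D : DG) (l : List ℕ) (e : ℕ × ℕ) : Prop :=
  ∃ p ∈ l.zip l.tail, e = connEdge D p.1 p.2

/-- A bifurcation: three distinct edges with a common vertex. -/
def Bifurcation (D : DG) (e1 e2 e3 : ℕ × ℕ) : Prop :=
  e1 ∈ D.edges ∧ e2 ∈ D.edges ∧ e3 ∈ D.edges ∧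
  e1 ≠ e2 ∧ e1 ≠ e3 ∧ e2 ≠ e3 ∧
  ∃ v, (v = e1.1 ∨ v = e1.2) ∧ (v = e2.1 ∨ v = e2.2) ∧ (v = e3.1 ∨ v = e3.2)

/-- A K-graph: a weakly connected, asemicyclic, `W`-`E`-functional oriented
graph with an inner vertex in which no bifurcation is transversal. -/
def IsKGraph (D : DG) : Prop :=
  D.IsOriented ∧ D.WeaklyConnected ∧ D.Asemicyclic ∧ D.WEFunctional ∧
  (∃ a, D.isInner a) ∧
  ∀ e1 e2 e3, Bifurcation D e1 e2 e3 →
    ¬ (Transversal D e1 ∧ Transversal D e2 ∧ Transversal D e3)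

/-- A Q-graph: a weakly connected, asemicyclic, `W`-`E`-functional oriented
graph with an inner vertex. -/
def IsQGraph (D : DG) : Prop :=
  D.IsOriented ∧ D.WeaklyConnected ∧ D.Asemicyclic ∧ D.WEFunctional ∧
  ∃ a, D.isInner a

/-!
If `⟨D, L⟩` has no inner edge, it has a single inner vertex and is a basic K-graph. Otherwise every
inner edge `(a, b)` is a bridge, and the two sides of `D`, each completed by a stub of `(a, b)`,
are again local compass graphs with fewer edges, hence have constructions by induction.

Decency makes every such cut satisfy (XYC). If neither alternative held for `Y`, then neither stub
would be a distinguished `Y` edge of its half; each distinguished edge being the only candidate for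
a principal edge, some path ending in `(a, b)` would begin off its `YE` edge and some path starting
with `(a, b)` would end off its `YW` edge. Joined at `(a, b)`, they form a path that is not decent.
-/

open Relation

section Reversal

/-- The digraph with every edge turned around. Reversal exchanges west and east, so each fact about
the western half of a cut yields its eastern counterpart. -/
def DG.reverse (D : DG) : DG := ⟨D.verts, D.edges.image Prod.swap⟩

/-- The labelling of the reversed graph. -/
def Lab.reverse (L : Lab) : Lab := fun v Y X => (L v Y X.other).swap

/-- The distinguished edges seen in the reversed graph. -/
def DistE.reverse (δ : DistE) : DistE := fun Y X => (δ Y X.other).swap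

/-- The digraph with one edge removed. -/
def DG.del (D : DG) (e : ℕ × ℕ) : DG := ⟨D.verts, D.edges.erase e⟩

variable {D : DG} {L : Lab}

@[simp]
theorem DG.mem_edges_reverse {e : ℕ × ℕ} : e ∈ D.reverse.edges ↔ e.swap ∈ D.edges := by
  simp [reverse, Prod.swap_eq_iff_eq_swap]

@[simp]
theorem DG.verts_reverse : D.reverse.verts = D.verts := rfl

@[simp]
theorem DG.reverse_reverse : D.reverse.reverse = D := by
  cases D
  simp [reverse, Finset.image_image]

@[simp]
theorem Lab.reverse_reverse : L.reverse.reverse = L := by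
  funext v Y X
  cases X <;> rfl

theorem Lab.reverse_eq_iff {v : ℕ} {Y : YDir} {X : XDir} {g : ℕ × ℕ} :
    L.reverse v Y X = g ↔ L v Y X.other = g.swap := by
  simp only [reverse, Prod.swap_eq_iff_eq_swap]

@[simp]
theorem DistE.reverse_reverse {δ : DistE} : δ.reverse.reverse = δ := by
  funext Y X
  cases X <;> rfl

theorem DG.card_edges_reverse : D.reverse.edges.card = D.edges.card :=
  Finset.card_image_of_injective _ Prod.swap_injective

theorem DG.reverse_del (e : ℕ × ℕ) : (D.del e).reverse = D.reverse.del e.swap := by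
  simp only [reverse, del, Finset.image_erase Prod.swap_injective]

@[simp]
theorem DG.semiAdj_reverse : D.reverse.semiAdj = D.semiAdj := by
  funext u v
  simp [semiAdj, or_comm]

theorem DG.semiAdj_reverse_del {e : ℕ × ℕ} :
    (D.reverse.del e).semiAdj = (D.del e.swap).semiAdj := by
  rw [← semiAdj_reverse (D := D.del e.swap), reverse_del, Prod.swap_swap]

@[simp]
theorem DG.isWVert_reverse {v : ℕ} : D.reverse.isWVert v ↔ D.isEVert v := by
  simp [isWVert, isEVert]

@[simp]
theorem DG.isEVert_reverse {v : ℕ} : D.reverse.isEVert v ↔ D.isWVert v := by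
  simp [isWVert, isEVert]

@[simp]
theorem DG.isInner_reverse {v : ℕ} : D.reverse.isInner v ↔ D.isInner v := by
  simp [isInner, and_comm]

@[simp]
theorem DG.isWEdge_reverse {e : ℕ × ℕ} : D.reverse.isWEdge e ↔ D.isEEdge e.swap := by
  simp [isWEdge, isEEdge]

@[simp]
theorem DG.isEEdge_reverse {e : ℕ × ℕ} : D.reverse.isEEdge e ↔ D.isWEdge e.swap := by
  simp [isWEdge, isEEdge]

@[simp]
theorem DG.isInnerEdge_reverse {e : ℕ × ℕ} : D.reverse.isInnerEdge e ↔ D.isInnerEdge e.swap := by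
  simp [isInnerEdge, and_comm]

theorem DG.funcWEdge_reverse {e : ℕ × ℕ} : D.reverse.funcWEdge e ↔ D.funcEEdge e.swap := by
  simp [funcWEdge, funcEEdge]

theorem DG.funcEEdge_reverse {e : ℕ × ℕ} : D.reverse.funcEEdge e ↔ D.funcWEdge e.swap := by
  simp [funcWEdge, funcEEdge]

theorem DG.WEFunctional.reverse (h : D.WEFunctional) : D.reverse.WEFunctional :=
  ⟨fun _ he => funcWEdge_reverse.2 (h.2 _ (isWEdge_reverse.1 he)),
    fun _ he => funcEEdge_reverse.2 (h.1 _ (isEEdge_reverse.1 he))⟩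

theorem ProperLab.reverse (h : ProperLab D L) : ProperLab D.reverse L.reverse := by
  intro v hv Y
  obtain ⟨hW, hWv, hE, hEv⟩ := h v (DG.isInner_reverse.1 hv) Y
  exact ⟨DG.mem_edges_reverse.2 hE, hEv, DG.mem_edges_reverse.2 hW, hWv⟩

theorem ProperLab.mem_edges (h : ProperLab D L) {v : ℕ} (hv : D.isInner v) (Y : YDir) (X : XDir) :
    L v Y X ∈ D.edges := by
  cases X
  · exact (h v hv Y).1
  · exact (h v hv Y).2.2.1

theorem SeparatesNS.reverse (h : SeparatesNS D L) : SeparatesNS D.reverse L.reverse := by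
  have hcard (p : ℕ × ℕ → Prop) [DecidablePred p] :
      (D.reverse.edges.filter p).card = (D.edges.filter (fun e => p e.swap)).card := by
    rw [DG.reverse, Finset.filter_image, Finset.card_image_of_injective _ Prod.swap_injective]
  intro v hv
  simp only [hcard, Prod.fst_swap, Prod.snd_swap]
  obtain ⟨hW, hE⟩ := h v (DG.isInner_reverse.1 hv)
  exact ⟨fun hc => Prod.swap_injective.ne (hE hc), fun hc => Prod.swap_injective.ne (hW hc)⟩

end Reversal

section Reachability

variable {D : DG}

/-- There is a directed walk in `D` whose first edge is `g` and whose last edge is `h`. -/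
def DG.EdgeReaches (D : DG) : ℕ × ℕ → ℕ × ℕ → Prop :=
  ReflTransGen (fun g h => g ∈ D.edges ∧ h ∈ D.edges ∧ g.2 = h.1)

theorem DG.EdgeReaches.reverse {g h : ℕ × ℕ} (hgh : D.EdgeReaches g h) :
    D.reverse.EdgeReaches h.swap g.swap := by
  refine ReflTransGen.lift Prod.swap ?_ _ _ (ReflTransGen.swap _ _ hgh)
  rintro k l ⟨hl, hk, hlk⟩
  exact ⟨by simpa using hk, by simpa using hl, hlk.symm⟩

theorem DG.edgeReaches_reverse {g h : ℕ × ℕ} :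
    D.reverse.EdgeReaches g h ↔ D.EdgeReaches h.swap g.swap :=
  ⟨fun hgh => by simpa using hgh.reverse, fun hgh => by simpa using hgh.reverse⟩

theorem DG.semiAdj_symm (D : DG) {u v : ℕ} (h : D.semiAdj u v) : D.semiAdj v u := Or.symm h

theorem DG.reflTransGen_semiAdj_symm {u v : ℕ} (h : ReflTransGen D.semiAdj u v) :
    ReflTransGen D.semiAdj v u :=
  ReflTransGen.mono (fun _ _ => D.semiAdj_symm) _ _ (ReflTransGen.swap _ _ h)

/-- Both ends of `g` are joined by no semiwalk avoiding `g`. -/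
def DG.IsBridge (D : DG) (g : ℕ × ℕ) : Prop :=
  ¬ ReflTransGen (D.del g).semiAdj g.1 g.2

theorem DG.isBridge_reverse {g : ℕ × ℕ} : D.reverse.IsBridge g ↔ D.IsBridge g.swap := by
  rw [IsBridge, IsBridge, semiAdj_reverse_del]
  exact not_congr ⟨reflTransGen_semiAdj_symm, reflTransGen_semiAdj_symm⟩

theorem reflTransGen_avoiding_target {α : Type*} {r : α → α → Prop} {u v : α}
    (h : ReflTransGen r u v) : ReflTransGen (fun p q => r p q ∧ p ≠ v) u v := by
  induction h using ReflTransGen.head_induction_on with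
  | refl => exact .refl
  | @head p q hpq _ ih =>
    by_cases hp : p = v
    · rw [hp]
    · exact ih.head ⟨hpq, hp⟩

theorem DG.not_transGen_self_of_isBridge (h : ∀ g ∈ D.edges, D.IsBridge g) (v : ℕ) :
    ¬ TransGen (fun p q => (p, q) ∈ D.edges) v v := by
  intro hcycle
  obtain ⟨w, hvw, hwv⟩ := TransGen.head'_iff.1 hcycle
  refine h (v, w) hvw (reflTransGen_semiAdj_symm ?_)
  refine ReflTransGen.mono ?_ _ _ (reflTransGen_avoiding_target hwv)
  rintro p q ⟨hpq, hp⟩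
  exact Or.inl (Finset.mem_erase.2 ⟨fun hpq => hp (congrArg Prod.fst hpq), hpq⟩)

theorem DG.isOriented_of_isBridge (hne : D.verts.Nonempty)
    (hmem : ∀ e ∈ D.edges, e.1 ∈ D.verts ∧ e.2 ∈ D.verts) (h : ∀ g ∈ D.edges, D.IsBridge g) :
    D.IsOriented := by
  have hacyclic := not_transGen_self_of_isBridge h
  refine ⟨hmem, ?_, fun u v huv hvu => hacyclic u (.tail (.single huv) hvu), hne⟩
  rintro ⟨u, v⟩ huv (rfl : u = v)
  exact hacyclic u (.single huv)

theorem DG.semiAdj.mem_verts (hD : D.IsOriented) {u v : ℕ} (h : D.semiAdj u v) : v ∈ D.verts :=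
  h.elim (fun huv => (hD.1 _ huv).2) (fun hvu => (hD.1 _ hvu).1)

theorem DG.Asemicyclic.length_lt_two (hD : D.IsOriented) (hA : D.Asemicyclic)
    {H : SimpleGraph ℕ} (hH : ∀ p q, H.Adj p q → D.semiAdj p q) {u v : ℕ} (hvu : D.semiAdj v u)
    {p : H.Walk u v} (hp : p.IsPath) : p.length < 2 := by
  by_contra! hlength
  have hverts {w : ℕ} (hw : w ∈ p.support) : w ∈ D.verts := by
    have huw := (H.reachable_iff_reflTransGen u w).1 ⟨p.takeUntil w hw⟩
    obtain rfl | ⟨z, -, hzw⟩ := huw.cases_tail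
    · exact hvu.mem_verts hD
    · exact (hH _ _ hzw).mem_verts hD
  refine hA (p.support ++ [u]) ⟨?_, ?_, ?_, ?_, ?_⟩
  · simpa using hlength
  · simpa [or_imp, forall_and] using ⟨fun w => hverts, hvu.mem_verts hD⟩
  · simp [List.head?_append, List.head?_eq_some_head p.support_ne_nil]
  · simpa using hp.support_nodup
  · refine (p.isChain_adj_support.imp hH).append (List.isChain_singleton u) ?_
    simp [List.getLast?_eq_some_getLast p.support_ne_nil, hvu]

theorem DG.Asemicyclic.isBridge (hD : D.IsOriented) (hA : D.Asemicyclic) {g : ℕ × ℕ}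
    (hg : g ∈ D.edges) : D.IsBridge g := by
  obtain ⟨u, v⟩ := g
  intro huv
  let H := SimpleGraph.fromRel (fun p q => (p, q) ∈ (D.del (u, v)).edges)
  have hH (p q : ℕ) (hpq : H.Adj p q) : D.semiAdj p q :=
    hpq.2.imp Finset.mem_of_mem_erase Finset.mem_of_mem_erase
  have hreach : H.Reachable u v := by
    rw [H.reachable_iff_reflTransGen]
    refine ReflTransGen.mono (fun p q hpq => ⟨?_, hpq⟩) _ _ huv
    rintro rfl
    exact hpq.elim (fun h => hD.2.1 _ (Finset.mem_of_mem_erase h) rfl)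
      (fun h => hD.2.1 _ (Finset.mem_of_mem_erase h) rfl)
  obtain ⟨p, hp⟩ := hreach.exists_isPath
  have hlength : p.length < 2 := hA.length_lt_two hD hH (.inr hg) hp
  obtain h0 | h1 : p.length = 0 ∨ p.length = 1 := by omega
  · exact hD.2.1 _ hg (p.eq_of_length_eq_zero h0)
  · obtain ⟨-, huv | hvu⟩ := p.adj_of_length_eq_one h1
    · exact Finset.notMem_erase _ _ huv
    · exact hD.2.2.1 _ _ hg (Finset.mem_of_mem_erase hvu)

theorem DG.EdgeReaches.exists_isChain {g h : ℕ × ℕ} (hg : g ∈ D.edges) (hgh : D.EdgeReaches g h) :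
    ∃ l t : List ℕ, g.1 :: g.2 :: l = t ++ [h.1, h.2] ∧
      (g.1 :: g.2 :: l).IsChain (fun u v => (u, v) ∈ D.edges) := by
  induction hgh with
  | refl => exact ⟨[], [], rfl, by simpa using hg⟩
  | @tail h k _ hhk ih =>
    obtain ⟨l, t, hlt, hl⟩ := ih
    have happend : g.1 :: g.2 :: (l ++ [k.2]) = t ++ [h.1, h.2] ++ [k.2] := by
      rw [← hlt]
      rfl
    refine ⟨l ++ [k.2], t ++ [h.1], by simp [happend, hhk.2.2], ?_⟩
    rw [happend]
    refine (hlt ▸ hl).append (List.isChain_singleton k.2) ?_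
    simp [hhk.2.2, hhk.2.1]

theorem DG.isPath_of_isChain (hD : D.IsOriented)
    (hacyclic : ∀ v, ¬ TransGen (fun p q => (p, q) ∈ D.edges) v v) {u : ℕ} {l : List ℕ}
    (hu : u ∈ D.verts) (hl : (u :: l).IsChain (fun p q => (p, q) ∈ D.edges)) :
    D.IsPath (u :: l) := by
  have hpairwise : (u :: l).Pairwise (TransGen fun p q => (p, q) ∈ D.edges) :=
    (hl.imp fun _ _ => TransGen.single).pairwise
  refine ⟨List.cons_ne_nil _ _, ?_, hpairwise.imp ?_, hl⟩
  · rintro v (_ | ⟨_, hv⟩)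
    · exact hu
    · obtain ⟨w, -, hwv⟩ := TransGen.tail'_iff.1 ((List.pairwise_cons.1 hpairwise).1 v hv)
      exact (hD.1 _ hwv).2
  · rintro v w hvw rfl
    exact hacyclic v hvw

end Reachability

section TreeCompass

variable {D : DG} {L : Lab}

/-- A local compass graph in inductive form: weak connectivity and decency of paths are expressed
by reachability, and the absence of semicycles by every edge being a bridge. -/
structure TreeCompass (D : DG) (L : Lab) : Prop where
  mem_verts : ∀ e ∈ D.edges, e.1 ∈ D.verts ∧ e.2 ∈ D.verts
  connected : ∀ u ∈ D.verts, ∀ v ∈ D.verts, ReflTransGen D.semiAdj u v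
  isBridge : ∀ g ∈ D.edges, D.IsBridge g
  functional : D.WEFunctional
  exists_inner : ∃ a, D.isInner a
  properLab : ProperLab D L
  separates : SeparatesNS D L
  decent : ∀ Y, ∀ g ∈ D.edges, ∀ h ∈ D.edges, D.EdgeReaches g h →
    D.isInner g.1 → D.isInner h.2 → L g.1 Y .E = g ∨ L h.2 Y .W = h

theorem IsLocalCompass.treeCompass (h : IsLocalCompass D L) : TreeCompass D L := by
  obtain ⟨hD, hproper, hconn, hasemi, hfunc, hinner, hsep, hdecent⟩ := h
  have hbridge (g) (hg : g ∈ D.edges) : D.IsBridge g := hasemi.isBridge hD hg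
  refine ⟨hD.1, fun u hu v hv => ?_, hbridge, hfunc, hinner, hproper, hsep, ?_⟩
  · obtain ⟨l, ⟨hl, -, -, hchain⟩, hhead, hlast⟩ := hconn u hu v hv
    rw [List.head?_eq_some_head hl, Option.some_inj] at hhead
    rw [List.getLast?_eq_some_getLast hl, Option.some_inj] at hlast
    subst hhead hlast
    exact List.relationReflTransGen_of_exists_isChain l hchain hl
  · intro Y g hg h _ hgh _ _
    obtain ⟨l, t, hlt, hl⟩ := hgh.exists_isChain hg
    have hpath := DG.isPath_of_isChain hD (DG.not_transGen_self_of_isBridge hbridge)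
      (hD.1 _ hg).1 hl
    have hY : Ydecent L Y (g.1 :: g.2 :: l) := by
      cases Y
      · exact (hdecent _ hpath).1
      · exact (hdecent _ hpath).2
    refine (hY _ _ _ rfl).imp_right ?_
    rintro ⟨c, d, s, hrev, hlab⟩
    rw [hlt] at hrev
    simp only [List.reverse_append, List.reverse_cons, List.reverse_nil, List.nil_append,
      List.cons_append, List.cons.injEq] at hrev
    obtain ⟨rfl, rfl, -⟩ := hrev
    exact hlab

theorem TreeCompass.reverse (T : TreeCompass D L) : TreeCompass D.reverse L.reverse where
  mem_verts e he := (T.mem_verts _ (DG.mem_edges_reverse.1 he)).symm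
  connected := by simpa using T.connected
  isBridge g hg := DG.isBridge_reverse.2 (T.isBridge _ (DG.mem_edges_reverse.1 hg))
  functional := T.functional.reverse
  exists_inner := T.exists_inner.imp fun _ => DG.isInner_reverse.2
  properLab := T.properLab.reverse
  separates := T.separates.reverse
  decent Y g hg h hh hgh hg1 hh2 := by
    have hdecent := T.decent Y _ (DG.mem_edges_reverse.1 hh) _ (DG.mem_edges_reverse.1 hg)
      (DG.edgeReaches_reverse.1 hgh) (DG.isInner_reverse.1 hh2) (DG.isInner_reverse.1 hg1)
    exact hdecent.symm.imp Lab.reverse_eq_iff.2 Lab.reverse_eq_iff.2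

theorem TreeCompass.isOriented (T : TreeCompass D L) : D.IsOriented :=
  DG.isOriented_of_isBridge (T.exists_inner.imp fun _ h => h.1) T.mem_verts T.isBridge

/-- Every directed walk starting with `f` enters inner vertices only through their `YW` edges. A
construction realizing `L` has as its `YW` edge the unique `W`-edge with this property. -/
def Principal (D : DG) (L : Lab) (Y : YDir) (f : ℕ × ℕ) : Prop :=
  ∀ g ∈ D.edges, D.EdgeReaches f g → D.isInner g.2 → L g.2 Y .W = g

theorem Principal.of_reaches {Y : YDir} {f g : ℕ × ℕ} (hf : Principal D L Y f)
    (hfg : D.EdgeReaches f g) : Principal D L Y g :=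
  fun h hh hgh => hf h hh (hfg.trans hgh)

theorem TreeCompass.principal_or (T : TreeCompass D L) (Y : YDir) (e : ℕ × ℕ) :
    Principal D L Y e ∨ Principal D.reverse L.reverse Y e.swap := by
  by_contra! h
  simp only [Principal, not_forall] at h
  obtain ⟨⟨h, hh, heh, hh2, hlabW⟩, g, hg, heg, hg2, hlabE⟩ := h
  have hge : D.EdgeReaches g.swap e := by simpa using heg.reverse
  rcases T.decent Y _ (DG.mem_edges_reverse.1 hg) _ hh (hge.trans heh)
    (DG.isInner_reverse.1 hg2) hh2 with hlab | hlab
  · exact hlabE (Lab.reverse_eq_iff.2 hlab)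
  · exact hlabW hlab

end TreeCompass

section Marking

variable {D : DG} {L : Lab} {δ : DistE}

/-- For each `Y`, `δ Y W` is a `W`-edge, and it is the only `W`-edge that can be principal. -/
structure IsWMarking (D : DG) (L : Lab) (δ : DistE) : Prop where
  isWEdge : ∀ Y, D.isWEdge (δ Y .W)
  eq_of_principal : ∀ Y f, D.isWEdge f → Principal D L Y f → f = δ Y .W

/-- The invariant satisfied by the distinguished edges of a construction realizing `L`. -/
structure IsMarking (D : DG) (L : Lab) (δ : DistE) : Prop where
  west : IsWMarking D L δ
  east : IsWMarking D.reverse L.reverse δ.reverse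
  reaches : ∀ Y, D.EdgeReaches (δ Y .W) (δ Y .E)

theorem IsMarking.reverse (h : IsMarking D L δ) : IsMarking D.reverse L.reverse δ.reverse where
  west := h.east
  east := by simpa using h.west
  reaches Y := (h.reaches Y).reverse

end Marking

section Base

variable {D : DG} {L : Lab} {b : ℕ}

theorem TreeCompass.isWVert_of_edge (T : TreeCompass D L) (hD : ∀ e, ¬ D.isInnerEdge e)
    (hb : D.isInner b) {u : ℕ} (hu : (u, b) ∈ D.edges) : D.isWVert u :=
  ⟨(T.mem_verts _ hu).1, fun t ht => hD (u, b) ⟨hu, ⟨(T.mem_verts _ hu).1, ⟨t, ht⟩, b, hu⟩, hb⟩⟩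

theorem TreeCompass.isEVert_of_edge (T : TreeCompass D L) (hD : ∀ e, ¬ D.isInnerEdge e)
    (hb : D.isInner b) {w : ℕ} (hw : (b, w) ∈ D.edges) : D.isEVert w :=
  DG.isWVert_reverse.1 (T.reverse.isWVert_of_edge (fun _ he => hD _ (DG.isInnerEdge_reverse.1 he))
    (DG.isInner_reverse.2 hb) (DG.mem_edges_reverse.2 hw))

theorem TreeCompass.adj_of_no_innerEdge (T : TreeCompass D L) (hD : ∀ e, ¬ D.isInnerEdge e)
    (hb : D.isInner b) {v : ℕ} (hv : v ∈ D.verts) :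
    v = b ∨ (v, b) ∈ D.edges ∨ (b, v) ∈ D.edges := by
  have hbv := T.connected b hb.1 v hv
  induction hbv with
  | refl => exact .inl rfl
  | @tail u w _ huw ih =>
    rcases ih (huw.elim (fun h => (T.mem_verts _ h).1) fun h => (T.mem_verts _ h).2) with
      rfl | hub | hbu
    · exact .inr huw.symm
    · have hu := T.isWVert_of_edge hD hb hub
      rcases huw with huw | hwu
      · exact .inl ((T.functional.1 _ ⟨hub, hu⟩).2 w huw)
      · exact absurd hwu (hu.2 w)
    · have hu := T.isEVert_of_edge hD hb hbu
      rcases huw with huw | hwu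
      · exact absurd huw (hu.2 w)
      · exact .inl ((T.functional.2 _ ⟨hbu, hu⟩).2 w hwu)

theorem TreeCompass.edge_of_no_innerEdge (T : TreeCompass D L) (hD : ∀ e, ¬ D.isInnerEdge e)
    (hb : D.isInner b) {e : ℕ × ℕ} (he : e ∈ D.edges) : e.1 = b ∨ e.2 = b := by
  rcases T.adj_of_no_innerEdge hD hb (T.mem_verts _ he).1 with h | h | h
  · exact .inl h
  · exact .inr ((T.functional.1 _ ⟨h, T.isWVert_of_edge hD hb h⟩).2 e.2 he)
  · exact absurd he ((T.isEVert_of_edge hD hb h).2 e.2)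

theorem TreeCompass.isBasicK (T : TreeCompass D L) (hD : ∀ e, ¬ D.isInnerEdge e)
    (hb : D.isInner b) : IsBasicK D (L b) :=
  ⟨T.isOriented, b, hb.1, fun _ => T.edge_of_no_innerEdge hD hb,
    fun _ => T.adj_of_no_innerEdge hD hb, hb.2.1, hb.2.2, T.properLab b hb,
    (T.separates b hb).1, (T.separates b hb).2⟩

theorem TreeCompass.isWMarking (T : TreeCompass D L) (hD : ∀ e, ¬ D.isInnerEdge e)
    (hb : D.isInner b) : IsWMarking D L (L b) where
  isWEdge Y := by
    obtain ⟨hmem, hsnd, -⟩ := T.properLab b hb Y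
    exact ⟨hmem, T.isWVert_of_edge hD hb (by convert hmem; exact hsnd.symm)⟩
  eq_of_principal Y f hf hprincipal := by
    have hf2 : f.2 = b := by
      refine (T.edge_of_no_innerEdge hD hb hf.1).resolve_left ?_
      rintro rfl
      exact hb.2.1.elim hf.2.2
    rw [← hf2]
    exact (hprincipal f hf.1 .refl (hf2 ▸ hb)).symm

theorem TreeCompass.isMarking (T : TreeCompass D L) (hD : ∀ e, ¬ D.isInnerEdge e)
    (hb : D.isInner b) : IsMarking D L (L b) where
  west := T.isWMarking hD hb
  east := T.reverse.isWMarking (fun _ he => hD _ (DG.isInnerEdge_reverse.1 he))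
    (DG.isInner_reverse.2 hb)
  reaches Y := by
    obtain ⟨hW, hWb, hE, hEb⟩ := T.properLab b hb Y
    exact .single ⟨hW, hE, hWb.trans hEb.symm⟩

end Base

section Piece

variable {D D' : DG} {L L' : Lab} {ψ : ℕ → ℕ}

/-- `D'` with the labelling `L'` becomes a subgraph of `D` with the labelling `L` when the vertices
are renamed by `ψ`, which moves no inner vertex of `D'`. -/
structure IsPiece (D : DG) (L : Lab) (D' : DG) (L' : Lab) (ψ : ℕ → ℕ) : Prop where
  map_mem : ∀ g ∈ D'.edges, Prod.map ψ ψ g ∈ D.edges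
  injOn : Set.InjOn (Prod.map ψ ψ) D'.edges
  fix : ∀ v, D'.isInner v → ψ v = v
  isInner : ∀ v, D'.isInner v → D.isInner v
  lab : ∀ v, D'.isInner v → ∀ Y X, Prod.map ψ ψ (L' v Y X) = L v Y X
  properLab : ProperLab D' L'

theorem IsPiece.reverse (P : IsPiece D L D' L' ψ) :
    IsPiece D.reverse L.reverse D'.reverse L'.reverse ψ where
  map_mem _ hg := DG.mem_edges_reverse.2 (P.map_mem _ (DG.mem_edges_reverse.1 hg))
  injOn _ hg _ hh hgh := Prod.swap_injective <|
    P.injOn (DG.mem_edges_reverse.1 hg) (DG.mem_edges_reverse.1 hh) (congrArg Prod.swap hgh)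
  fix v hv := P.fix v (DG.isInner_reverse.1 hv)
  isInner v hv := DG.isInner_reverse.2 (P.isInner v (DG.isInner_reverse.1 hv))
  lab v hv Y X := congrArg Prod.swap (P.lab v (DG.isInner_reverse.1 hv) Y X.other)
  properLab := P.properLab.reverse

theorem IsPiece.lab_eq_iff (P : IsPiece D L D' L' ψ) {v : ℕ} (hv : D'.isInner v) {g : ℕ × ℕ}
    (hg : g ∈ D'.edges) {Y : YDir} {X : XDir} : L' v Y X = g ↔ L v Y X = Prod.map ψ ψ g := by
  rw [← P.lab v hv, P.injOn.eq_iff (P.properLab.mem_edges hv Y X) hg]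

theorem IsPiece.edgeReaches (P : IsPiece D L D' L' ψ) {g h : ℕ × ℕ} (hgh : D'.EdgeReaches g h) :
    D.EdgeReaches (Prod.map ψ ψ g) (Prod.map ψ ψ h) :=
  ReflTransGen.lift _ (fun _ _ h => ⟨P.map_mem _ h.1, P.map_mem _ h.2.1, congrArg ψ h.2.2⟩) _ _ hgh

theorem IsPiece.principal (P : IsPiece D L D' L' ψ) {Y : YDir} {f : ℕ × ℕ}
    (hf : Principal D L Y (Prod.map ψ ψ f)) : Principal D' L' Y f := by
  intro g hg hfg hg2
  have hψ : (Prod.map ψ ψ g).2 = g.2 := P.fix _ hg2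
  have hlab := hf _ (P.map_mem g hg) (P.edgeReaches hfg) (hψ ▸ P.isInner _ hg2)
  rw [hψ] at hlab
  exact (P.lab_eq_iff hg2 hg).2 hlab

theorem IsPiece.isBridge (P : IsPiece D L D' L' ψ) {g : ℕ × ℕ} (hg : g ∈ D'.edges)
    (h : D.IsBridge (Prod.map ψ ψ g)) : D'.IsBridge g := by
  have hdel {u v : ℕ} (huv : (u, v) ∈ (D'.del g).edges) :
      (ψ u, ψ v) ∈ (D.del (Prod.map ψ ψ g)).edges := by
    obtain ⟨hne, huv⟩ := Finset.mem_erase.1 huv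
    exact Finset.mem_erase.2 ⟨P.injOn.ne huv hg hne, P.map_mem _ huv⟩
  exact fun hwalk => h (ReflTransGen.lift ψ (fun _ _ => Or.imp hdel hdel) _ _ hwalk)

theorem IsPiece.card_filter_le (P : IsPiece D L D' L' ψ) {π : ℕ × ℕ → ℕ}
    (hπ : ∀ e, π (Prod.map ψ ψ e) = ψ (π e)) {v : ℕ} (hv : D'.isInner v) :
    (D'.edges.filter fun e => π e = v).card ≤ (D.edges.filter fun e => π e = v).card := by
  refine Finset.card_le_card_of_injOn (Prod.map ψ ψ) (fun e he => ?_)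
    (P.injOn.mono (Finset.coe_subset.2 (Finset.filter_subset _ _)))
  simp only [Finset.coe_filter, Set.mem_ofPred_eq] at he ⊢
  exact ⟨P.map_mem e he.1, by rw [hπ, he.2, P.fix v hv]⟩

theorem IsPiece.separates (P : IsPiece D L D' L' ψ) (h : SeparatesNS D L) :
    SeparatesNS D' L' := by
  intro v hv
  obtain ⟨hW, hE⟩ := h v (P.isInner v hv)
  simp only [← P.lab v hv] at hW hE
  exact ⟨fun hcard => ne_of_apply_ne _ (hW (hcard.trans (P.card_filter_le (fun _ => rfl) hv))),
    fun hcard => ne_of_apply_ne _ (hE (hcard.trans (P.card_filter_le (fun _ => rfl) hv)))⟩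

theorem IsPiece.decent (P : IsPiece D L D' L' ψ) (T : TreeCompass D L) (Y : YDir) {g h : ℕ × ℕ}
    (hg : g ∈ D'.edges) (hh : h ∈ D'.edges) (hgh : D'.EdgeReaches g h) (hg1 : D'.isInner g.1)
    (hh2 : D'.isInner h.2) : L' g.1 Y .E = g ∨ L' h.2 Y .W = h := by
  have hψg : (Prod.map ψ ψ g).1 = g.1 := P.fix _ hg1
  have hψh : (Prod.map ψ ψ h).2 = h.2 := P.fix _ hh2
  have hdecent := T.decent Y _ (P.map_mem g hg) _ (P.map_mem h hh) (P.edgeReaches hgh)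
    (hψg ▸ P.isInner _ hg1) (hψh ▸ P.isInner _ hh2)
  rw [hψg, hψh] at hdecent
  exact hdecent.imp (P.lab_eq_iff hg1 hg).2 (P.lab_eq_iff hh2 hh).2

end Piece

section Side

variable {D : DG} {L : Lab} {a b x : ℕ} {A : Finset ℕ}

/-- The subgraph of `D` spanned by `C`, capped with an additional vertex `z` and edge `e`. -/
def DG.cap (D : DG) (C : Finset ℕ) (z : ℕ) (e : ℕ × ℕ) : DG :=
  ⟨insert z C, insert e (D.edges.filter fun g => g.1 ∈ C ∧ g.2 ∈ C)⟩

/-- The labelling with the value `e` replaced by `e'`. -/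
def Lab.relabel (L : Lab) (e e' : ℕ × ℕ) : Lab :=
  fun v Y X => if L v Y X = e then e' else L v Y X

@[simp]
theorem DG.mem_edges_cap {C : Finset ℕ} {z : ℕ} {e g : ℕ × ℕ} :
    g ∈ (D.cap C z e).edges ↔ g = e ∨ g ∈ D.edges ∧ g.1 ∈ C ∧ g.2 ∈ C := by
  simp [cap]

@[simp]
theorem DG.mem_verts_cap {C : Finset ℕ} {z v : ℕ} {e : ℕ × ℕ} :
    v ∈ (D.cap C z e).verts ↔ v = z ∨ v ∈ C := by
  simp [cap]

@[simp]
theorem DG.reverse_cap {C : Finset ℕ} {z : ℕ} {e : ℕ × ℕ} :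
    (D.cap C z e).reverse = D.reverse.cap C z e.swap := by
  simp only [reverse, cap, Finset.image_insert, Finset.filter_image, Prod.fst_swap, Prod.snd_swap,
    and_comm]

@[simp]
theorem Lab.reverse_relabel {e e' : ℕ × ℕ} :
    (L.relabel e e').reverse = L.reverse.relabel e.swap e'.swap := by
  funext v Y X
  simp only [reverse, relabel, apply_ite Prod.swap, Prod.swap_inj]

/-- `A` is the side of `a` in `D` with the inner edge `(a, b)` removed, and `x` is a vertex outside
`D`. The western half of `D` is then `D.cap A x (a, x)`, labelled by `L.relabel (a, b) (a, x)`. -/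
structure IsSide (D : DG) (a b : ℕ) (A : Finset ℕ) (x : ℕ) : Prop where
  isInnerEdge : D.isInnerEdge (a, b)
  mem : a ∈ A
  notMem : b ∉ A
  subset : A ⊆ D.verts
  closed : ∀ u v, (u, v) ∈ D.edges → (u, v) ≠ (a, b) → (u ∈ A ↔ v ∈ A)
  reach : ∀ v ∈ A, ReflTransGen (D.del (a, b)).semiAdj a v
  fresh : x ∉ D.verts

namespace IsSide

theorem ne_of_mem (S : IsSide D a b A x) {v : ℕ} (hv : v ∈ A) : v ≠ x :=
  fun h => S.fresh (h ▸ S.subset hv)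

theorem mem_cap_of_ne (S : IsSide D a b A x) {g : ℕ × ℕ} (hg : g ∈ D.edges) (hne : g ≠ (a, b))
    (hA : g.1 ∈ A ∨ g.2 ∈ A) : g ∈ (D.cap A x (a, x)).edges := by
  have hclosed := S.closed g.1 g.2 hg hne
  exact DG.mem_edges_cap.2 (.inr ⟨hg, by tauto, by tauto⟩)

theorem mem_cap_iff_of_snd_mem (S : IsSide D a b A x) {u v : ℕ} (hv : v ∈ A) :
    (u, v) ∈ (D.cap A x (a, x)).edges ↔ (u, v) ∈ D.edges := by
  refine ⟨fun h => ?_, fun h => S.mem_cap_of_ne h ?_ (.inr hv)⟩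
  · rcases DG.mem_edges_cap.1 h with h | h
    · exact absurd (congrArg Prod.snd h) (S.ne_of_mem hv)
    · exact h.1
  · rintro ⟨⟩
    exact S.notMem hv

theorem exists_mem_cap_iff_of_mem (S : IsSide D a b A x) {u : ℕ} (hu : u ∈ A) :
    (∃ v, (u, v) ∈ (D.cap A x (a, x)).edges) ↔ ∃ v, (u, v) ∈ D.edges := by
  constructor
  · rintro ⟨v, hv⟩
    rcases DG.mem_edges_cap.1 hv with hv | hv
    · exact ⟨b, (Prod.mk.inj hv).1 ▸ S.isInnerEdge.1⟩
    · exact ⟨v, hv.1⟩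
  · rintro ⟨v, hv⟩
    by_cases h : (u, v) = (a, b)
    · obtain ⟨rfl, rfl⟩ := Prod.mk.inj h
      exact ⟨x, DG.mem_edges_cap.2 (.inl rfl)⟩
    · exact ⟨v, S.mem_cap_of_ne hv h (.inl hu)⟩

theorem notMem_cap_of_fst (S : IsSide D a b A x) (v : ℕ) :
    (x, v) ∉ (D.cap A x (a, x)).edges := by
  intro h
  rcases DG.mem_edges_cap.1 h with h | ⟨-, hx, -⟩
  · exact S.ne_of_mem S.mem (congrArg Prod.fst h).symm
  · exact S.ne_of_mem hx rfl

theorem isInner_cap_iff (S : IsSide D a b A x) {v : ℕ} :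
    (D.cap A x (a, x)).isInner v ↔ v ∈ A ∧ D.isInner v := by
  by_cases hv : v ∈ A
  · simp only [DG.isInner, DG.mem_verts_cap, S.mem_cap_iff_of_snd_mem hv,
      S.exists_mem_cap_iff_of_mem hv, hv, S.subset hv, or_true, true_and]
  · refine iff_of_false (fun h => ?_) (fun h => hv h.1)
    obtain ⟨w, hw⟩ := h.2.2
    obtain rfl := (DG.mem_verts_cap.1 h.1).resolve_right hv
    exact S.notMem_cap_of_fst w hw

theorem isWVert_cap_iff (S : IsSide D a b A x) {v : ℕ} :
    (D.cap A x (a, x)).isWVert v ↔ v ∈ A ∧ D.isWVert v := by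
  by_cases hv : v ∈ A
  · simp only [DG.isWVert, DG.mem_verts_cap, S.mem_cap_iff_of_snd_mem hv, hv, S.subset hv,
      or_true, true_and]
  · refine iff_of_false (fun h => h.2 a ?_) (fun h => hv h.1)
    obtain rfl := (DG.mem_verts_cap.1 h.1).resolve_right hv
    exact DG.mem_edges_cap.2 (.inl rfl)

theorem isEVert_cap_iff (S : IsSide D a b A x) {v : ℕ} :
    (D.cap A x (a, x)).isEVert v ↔ v = x ∨ v ∈ A ∧ D.isEVert v := by
  by_cases hv : v ∈ A
  · simp only [DG.isEVert, DG.mem_verts_cap, ← not_exists, S.exists_mem_cap_iff_of_mem hv, hv,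
      S.subset hv, S.ne_of_mem hv, false_or, true_and]
  · simp only [DG.isEVert, DG.mem_verts_cap, hv, or_false, false_and, and_iff_left_iff_imp]
    rintro rfl
    exact S.notMem_cap_of_fst

theorem ne_of_isWVert (S : IsSide D a b A x) {v : ℕ} (hv : D.isWVert v) : v ≠ a := by
  rintro rfl
  exact S.isInnerEdge.2.1.2.1.elim hv.2

theorem isWEdge_cap_iff (S : IsSide D a b A x) {f : ℕ × ℕ} :
    (D.cap A x (a, x)).isWEdge f ↔ f.1 ∈ A ∧ D.isWEdge f := by
  simp only [DG.isWEdge, S.isWVert_cap_iff]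
  constructor
  · rintro ⟨hf, hA, hW⟩
    rcases DG.mem_edges_cap.1 hf with rfl | hf
    · exact absurd rfl (S.ne_of_isWVert hW)
    · exact ⟨hA, hf.1, hW⟩
  · rintro ⟨hA, hf, hW⟩
    refine ⟨S.mem_cap_of_ne hf ?_ (.inl hA), hA, hW⟩
    rintro rfl
    exact S.ne_of_isWVert hW rfl

theorem eq_of_mem_cap (S : IsSide D a b A x) {u : ℕ} (hu : (u, x) ∈ (D.cap A x (a, x)).edges) :
    u = a :=
  (DG.mem_edges_cap.1 hu).elim (congrArg Prod.fst) fun h => absurd rfl (S.ne_of_mem h.2.2)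

theorem funcEEdge_cap (S : IsSide D a b A x) : (D.cap A x (a, x)).funcEEdge (a, x) :=
  ⟨⟨DG.mem_edges_cap.2 (.inl rfl), S.isEVert_cap_iff.2 (.inl rfl)⟩, fun _ => S.eq_of_mem_cap⟩

theorem isEEdge_cap_iff (S : IsSide D a b A x) {f : ℕ × ℕ} :
    (D.cap A x (a, x)).isEEdge f ↔ f = (a, x) ∨ f.2 ∈ A ∧ D.isEEdge f := by
  obtain ⟨u, v⟩ := f
  simp only [DG.isEEdge, S.isEVert_cap_iff]
  constructor
  · rintro ⟨huv, rfl | ⟨hv, hE⟩⟩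
    · exact .inl (by rw [S.eq_of_mem_cap huv])
    · exact .inr ⟨hv, (S.mem_cap_iff_of_snd_mem hv).1 huv, hE⟩
  · rintro (h | ⟨hv, huv, hE⟩)
    · obtain ⟨rfl, rfl⟩ := Prod.mk.inj h
      exact ⟨S.funcEEdge_cap.1.1, .inl rfl⟩
    · exact ⟨(S.mem_cap_iff_of_snd_mem hv).2 huv, .inr ⟨hv, hE⟩⟩

theorem wEFunctional_cap (S : IsSide D a b A x) (h : D.WEFunctional) :
    (D.cap A x (a, x)).WEFunctional := by
  refine ⟨fun f hf => ⟨hf, fun c hc => ?_⟩, fun f hf => ?_⟩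
  · have hfW := (S.isWEdge_cap_iff.1 hf).2
    rcases DG.mem_edges_cap.1 hc with hc | hc
    · exact absurd (congrArg Prod.fst hc) (S.ne_of_isWVert hfW.2)
    · exact (h.1 f hfW).2 c hc.1
  · obtain ⟨u, v⟩ := f
    rcases S.isEVert_cap_iff.1 hf.2 with rfl | ⟨hv, hE⟩
    · obtain rfl := S.eq_of_mem_cap hf.1
      exact S.funcEEdge_cap
    · have huv := (S.mem_cap_iff_of_snd_mem hv).1 hf.1
      exact ⟨hf, fun c hc => (h.2 _ ⟨huv, hE⟩).2 c ((S.mem_cap_iff_of_snd_mem hv).1 hc)⟩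

theorem connected_cap (S : IsSide D a b A x) :
    ∀ u ∈ (D.cap A x (a, x)).verts, ∀ v ∈ (D.cap A x (a, x)).verts,
      ReflTransGen (D.cap A x (a, x)).semiAdj u v := by
  have hdel {u v : ℕ} (huv : (u, v) ∈ (D.del (a, b)).edges) :
      (u ∈ A ↔ v ∈ A) ∧ (u ∈ A → (u, v) ∈ (D.cap A x (a, x)).edges) := by
    obtain ⟨hne, huv⟩ := Finset.mem_erase.1 huv
    exact ⟨S.closed u v huv hne, fun hu => S.mem_cap_of_ne huv hne (.inl hu)⟩
  have hreach {v : ℕ} (hv : ReflTransGen (D.del (a, b)).semiAdj a v) :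
      v ∈ A ∧ ReflTransGen (D.cap A x (a, x)).semiAdj a v := by
    induction hv with
    | refl => exact ⟨S.mem, .refl⟩
    | tail _ huv ih =>
      obtain ⟨hu, hau⟩ := ih
      rcases huv with huv | hvu
      · exact ⟨(hdel huv).1.1 hu, hau.tail (.inl ((hdel huv).2 hu))⟩
      · have hv := (hdel hvu).1.2 hu
        exact ⟨hv, hau.tail (.inr ((hdel hvu).2 hv))⟩
  have hcap {v : ℕ} (hv : v ∈ (D.cap A x (a, x)).verts) :
      ReflTransGen (D.cap A x (a, x)).semiAdj a v := by
    rcases DG.mem_verts_cap.1 hv with rfl | hv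
    · exact .single (.inl (DG.mem_edges_cap.2 (.inl rfl)))
    · exact (hreach (S.reach v hv)).2
  exact fun u hu v hv => (DG.reflTransGen_semiAdj_symm (hcap hu)).trans (hcap hv)

theorem mem_verts_cap (S : IsSide D a b A x) :
    ∀ e ∈ (D.cap A x (a, x)).edges,
      e.1 ∈ (D.cap A x (a, x)).verts ∧ e.2 ∈ (D.cap A x (a, x)).verts := by
  intro e he
  simp only [DG.mem_verts_cap]
  rcases DG.mem_edges_cap.1 he with rfl | ⟨-, h1, h2⟩
  · exact ⟨.inr S.mem, .inl rfl⟩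
  · exact ⟨.inr h1, .inr h2⟩

theorem card_cap_lt (S : IsSide D a b A x) : (D.cap A x (a, x)).edges.card < D.edges.card := by
  obtain ⟨c, hc⟩ := S.isInnerEdge.2.2.2.2
  have hsubset : (D.edges.filter fun g => g.1 ∈ A ∧ g.2 ∈ A) ⊆
      (D.edges.erase (a, b)).erase (b, c) := by
    intro g hg
    obtain ⟨hg, h1, h2⟩ := Finset.mem_filter.1 hg
    refine Finset.mem_erase.2 ⟨?_, Finset.mem_erase.2 ⟨?_, hg⟩⟩
    · rintro rfl
      exact S.notMem h1
    · rintro rfl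
      exact S.notMem h2
  have hne : (b, c) ≠ (a, b) := fun h => S.notMem ((Prod.mk.inj h).1 ▸ S.mem)
  calc (D.cap A x (a, x)).edges.card
    _ ≤ (D.edges.filter fun g => g.1 ∈ A ∧ g.2 ∈ A).card + 1 := Finset.card_insert_le _ _
    _ ≤ ((D.edges.erase (a, b)).erase (b, c)).card + 1 := by gcongr
    _ = (D.edges.erase (a, b)).card :=
      Finset.card_erase_add_one (Finset.mem_erase.2 ⟨hne, hc⟩)
    _ < D.edges.card := Finset.card_erase_lt_of_mem S.isInnerEdge.1

theorem map_update_of_mem (S : IsSide D a b A x) {g : ℕ × ℕ} (hg : g.1 ∈ A ∧ g.2 ∈ A) :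
    Prod.map (Function.update id x b) (Function.update id x b) g = g :=
  Prod.ext (Function.update_of_ne (S.ne_of_mem hg.1) _ _)
    (Function.update_of_ne (S.ne_of_mem hg.2) _ _)

theorem map_update_cap (S : IsSide D a b A x) :
    Prod.map (Function.update id x b) (Function.update id x b) (a, x) = (a, b) :=
  Prod.ext (Function.update_of_ne (S.ne_of_mem S.mem) _ _) (Function.update_self _ _ _)

theorem map_update_of_ne (S : IsSide D a b A x) {g : ℕ × ℕ}
    (hg : g ∈ (D.cap A x (a, x)).edges) (hne : g ≠ (a, x)) :
    Prod.map (Function.update id x b) (Function.update id x b) g = g :=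
  S.map_update_of_mem ((DG.mem_edges_cap.1 hg).resolve_left hne).2

theorem map_update_of_isWEdge (S : IsSide D a b A x) {f : ℕ × ℕ}
    (hf : (D.cap A x (a, x)).isWEdge f) :
    Prod.map (Function.update id x b) (Function.update id x b) f = f := by
  refine S.map_update_of_ne hf.1 ?_
  rintro rfl
  exact S.ne_of_isWVert (S.isWEdge_cap_iff.1 hf).2.2 rfl

theorem injOn_map_update (S : IsSide D a b A x) :
    Set.InjOn (Prod.map (Function.update id x b) (Function.update id x b))
      (D.cap A x (a, x)).edges := by
  intro g hg h hh hgh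
  rcases DG.mem_edges_cap.1 hg with rfl | ⟨-, hgA⟩ <;>
    rcases DG.mem_edges_cap.1 hh with rfl | ⟨-, hhA⟩
  · rfl
  · rw [S.map_update_cap, S.map_update_of_mem hhA] at hgh
    subst hgh
    exact absurd hhA.2 S.notMem
  · rw [S.map_update_cap, S.map_update_of_mem hgA] at hgh
    subst hgh
    exact absurd hgA.2 S.notMem
  · rwa [S.map_update_of_mem hgA, S.map_update_of_mem hhA] at hgh

theorem relabel_mem_cap (S : IsSide D a b A x) (hL : ProperLab D L) {v : ℕ} (hv : v ∈ A)
    (hinner : D.isInner v) (Y : YDir) (X : XDir) :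
    L.relabel (a, b) (a, x) v Y X ∈ (D.cap A x (a, x)).edges ∧
      Prod.map (Function.update id x b) (Function.update id x b) (L.relabel (a, b) (a, x) v Y X) =
        L v Y X := by
  unfold Lab.relabel
  split_ifs with h
  · exact ⟨DG.mem_edges_cap.2 (.inl rfl), S.map_update_cap.trans h.symm⟩
  · have hend : (L v Y X).1 ∈ A ∨ (L v Y X).2 ∈ A := by
      obtain ⟨-, hW, -, hE⟩ := hL v hinner Y
      cases X
      · exact .inr (by rwa [hW])
      · exact .inl (by rwa [hE])
    have hmem := hL.mem_edges hinner Y X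
    refine ⟨S.mem_cap_of_ne hmem h hend, S.map_update_of_mem ?_⟩
    have hclosed := S.closed _ _ hmem h
    tauto

theorem properLab_relabel (S : IsSide D a b A x) (hL : ProperLab D L) :
    ProperLab (D.cap A x (a, x)) (L.relabel (a, b) (a, x)) := by
  intro v hv Y
  obtain ⟨hA, hinner⟩ := S.isInner_cap_iff.1 hv
  obtain ⟨-, hW, -, hE⟩ := hL v hinner Y
  refine ⟨(S.relabel_mem_cap hL hA hinner Y .W).1, ?_, (S.relabel_mem_cap hL hA hinner Y .E).1, ?_⟩
  · rw [Lab.relabel, if_neg, hW]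
    intro h
    exact S.notMem (by rwa [← hW, h] at hA)
  · unfold Lab.relabel
    split_ifs with h
    · rw [← hE, h]
    · exact hE

theorem isPiece_cap (S : IsSide D a b A x) (hL : ProperLab D L) :
    IsPiece D L (D.cap A x (a, x)) (L.relabel (a, b) (a, x)) (Function.update id x b) where
  map_mem g hg := by
    rcases DG.mem_edges_cap.1 hg with rfl | ⟨hg, hA⟩
    · exact S.map_update_cap ▸ S.isInnerEdge.1
    · exact (S.map_update_of_mem hA).symm ▸ hg
  injOn := S.injOn_map_update
  fix v hv := Function.update_of_ne (S.ne_of_mem (S.isInner_cap_iff.1 hv).1) _ _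
  isInner v hv := (S.isInner_cap_iff.1 hv).2
  lab v hv Y X := (S.relabel_mem_cap hL (S.isInner_cap_iff.1 hv).1 (S.isInner_cap_iff.1 hv).2 Y X).2
  properLab := S.properLab_relabel hL

theorem treeCompass_cap (S : IsSide D a b A x) (T : TreeCompass D L) :
    TreeCompass (D.cap A x (a, x)) (L.relabel (a, b) (a, x)) where
  mem_verts := S.mem_verts_cap
  connected := S.connected_cap
  isBridge g hg := (S.isPiece_cap T.properLab).isBridge hg
    (T.isBridge _ ((S.isPiece_cap T.properLab).map_mem g hg))
  functional := S.wEFunctional_cap T.functional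
  exists_inner := ⟨a, S.isInner_cap_iff.2 ⟨S.mem, S.isInnerEdge.2.1⟩⟩
  properLab := S.properLab_relabel T.properLab
  separates := (S.isPiece_cap T.properLab).separates T.separates
  decent Y _ hg _ hh := (S.isPiece_cap T.properLab).decent T Y hg hh

end IsSide

end Side

section Split

variable {D : DG} {L : Lab} {δW δE : DistE} {a b x y : ℕ} {A B : Finset ℕ}

/-- `A` and `B` are the sides of the inner edge `(a, b)` of `D`, to be capped by the new vertices
`x` and `y`. -/
structure IsSplit (D : DG) (a b : ℕ) (A B : Finset ℕ) (x y : ℕ) : Prop where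
  west : IsSide D a b A x
  east : IsSide D.reverse b a B y
  disjoint : Disjoint A B
  union : A ∪ B = D.verts
  ne : x ≠ y

open Classical in
theorem TreeCompass.isSide (T : TreeCompass D L) (hab : D.isInnerEdge (a, b)) (hx : x ∉ D.verts) :
    IsSide D a b {v ∈ D.verts | ReflTransGen (D.del (a, b)).semiAdj a v} x where
  isInnerEdge := hab
  mem := Finset.mem_filter.2 ⟨hab.2.1.1, .refl⟩
  notMem h := T.isBridge _ hab.1 (Finset.mem_filter.1 h).2
  subset := Finset.filter_subset _ _
  closed u v huv hne := by
    have hadj : (D.del (a, b)).semiAdj u v := .inl (Finset.mem_erase.2 ⟨hne, huv⟩)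
    obtain ⟨hu, hv⟩ := T.mem_verts _ huv
    simp only [Finset.mem_filter, hu, hv, true_and]
    exact ⟨fun h => h.tail hadj, fun h => h.tail (DG.semiAdj_symm _ hadj)⟩
  reach v hv := (Finset.mem_filter.1 hv).2
  fresh := hx

theorem TreeCompass.reaches_end (T : TreeCompass D L) (hab : D.isInnerEdge (a, b)) {v : ℕ}
    (hv : v ∈ D.verts) :
    ReflTransGen (D.del (a, b)).semiAdj a v ∨ ReflTransGen (D.del (a, b)).semiAdj b v := by
  have hdel {u w : ℕ} (huw : (u, w) ∈ D.edges) :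
      (u = a ∧ w = b) ∨ (u, w) ∈ (D.del (a, b)).edges := by
    rw [← Prod.mk_inj, DG.del, Finset.mem_erase]
    tauto
  induction T.connected a hab.2.1.1 v hv with
  | refl => exact .inl .refl
  | @tail u w _ huw ih =>
    rcases huw with huw | hwu
    · rcases hdel huw with ⟨-, rfl⟩ | huw'
      · exact .inr .refl
      · exact (ih (T.mem_verts _ huw).1).imp (.tail · (.inl huw')) (.tail · (.inl huw'))
    · rcases hdel hwu with ⟨rfl, -⟩ | hwu'
      · exact .inl .refl
      · exact (ih (T.mem_verts _ hwu).2).imp (.tail · (.inr hwu')) (.tail · (.inr hwu'))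

theorem TreeCompass.exists_isSplit (T : TreeCompass D L) (hab : D.isInnerEdge (a, b)) :
    ∃ A B x y, IsSplit D a b A B x y := by
  classical
  obtain ⟨x, hx⟩ := Infinite.exists_notMem_finset D.verts
  obtain ⟨y, hy⟩ := Infinite.exists_notMem_finset (insert x D.verts)
  rw [Finset.mem_insert, not_or] at hy
  refine ⟨_, _, x, y, T.isSide hab hx, T.reverse.isSide (DG.isInnerEdge_reverse.2 hab) hy.2,
    ?_, ?_, Ne.symm hy.1⟩
  · refine Finset.disjoint_left.2 fun v hva hvb => T.isBridge _ hab.1 ?_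
    rw [Finset.mem_filter, DG.semiAdj_reverse_del] at hvb
    exact (Finset.mem_filter.1 hva).2.trans (DG.reflTransGen_semiAdj_symm hvb.2)
  · ext v
    simp only [Finset.mem_union, Finset.mem_filter, DG.semiAdj_reverse_del, DG.verts_reverse,
      ← and_or_left, and_iff_left_iff_imp]
    exact T.reaches_end hab

namespace IsSplit

theorem reverse (S : IsSplit D a b A B x y) : IsSplit D.reverse b a B A y x where
  west := S.east
  east := by simpa using S.west
  disjoint := S.disjoint.symm
  union := (Finset.union_comm B A).trans S.union
  ne := S.ne.symm

theorem mem_or_mem (S : IsSplit D a b A B x y) {v : ℕ} (hv : v ∈ D.verts) : v ∈ A ∨ v ∈ B :=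
  Finset.mem_union.1 (S.union ▸ hv)

theorem isPiece_east (S : IsSplit D a b A B x y) (hL : ProperLab D L) :
    IsPiece D L (D.cap B y (y, b)) (L.relabel (a, b) (y, b)) (Function.update id y a) := by
  simpa using (S.east.isPiece_cap hL.reverse).reverse

theorem treeCompass_east (S : IsSplit D a b A B x y) (T : TreeCompass D L) :
    TreeCompass (D.cap B y (y, b)) (L.relabel (a, b) (y, b)) := by
  simpa using (S.east.treeCompass_cap T.reverse).reverse

theorem map_update_east (S : IsSplit D a b A B x y) :
    Prod.map (Function.update id y a) (Function.update id y a) (y, b) = (a, b) :=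
  congrArg Prod.swap S.east.map_update_cap

theorem map_update_east_of_ne (S : IsSplit D a b A B x y) {g : ℕ × ℕ}
    (hg : g ∈ (D.cap B y (y, b)).edges) (hne : g ≠ (y, b)) :
    Prod.map (Function.update id y a) (Function.update id y a) g = g :=
  S.east.map_update_of_mem ((DG.mem_edges_cap.1 hg).resolve_left hne).2

theorem mem_east_of_ne (S : IsSplit D a b A B x y) {g : ℕ × ℕ} (hg : g ∈ D.edges)
    (hne : g ≠ (a, b)) (hB : g.1 ∈ B) : g ∈ (D.cap B y (y, b)).edges := by
  rw [← Prod.swap_swap g, ← DG.mem_edges_reverse, DG.reverse_cap]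
  exact S.east.mem_cap_of_ne (DG.mem_edges_reverse.2 hg) (Prod.swap_injective.ne hne) (.inr hB)

theorem isInner_east (S : IsSplit D a b A B x y) {v : ℕ} (hB : v ∈ B) (hv : D.isInner v) :
    (D.cap B y (y, b)).isInner v := by
  rw [← DG.isInner_reverse, DG.reverse_cap]
  exact S.east.isInner_cap_iff.2 ⟨hB, DG.isInner_reverse.2 hv⟩

theorem funcWEdge_east (S : IsSplit D a b A B x y) : (D.cap B y (y, b)).funcWEdge (y, b) := by
  rw [← Prod.swap_swap (y, b), ← DG.funcEEdge_reverse, DG.reverse_cap]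
  exact S.east.funcEEdge_cap

theorem card_east_lt (S : IsSplit D a b A B x y) :
    (D.cap B y (y, b)).edges.card < D.edges.card := by
  rw [← DG.card_edges_reverse, ← DG.card_edges_reverse (D := D), DG.reverse_cap]
  exact S.east.card_cap_lt

theorem isWEdge_east_iff (S : IsSplit D a b A B x y) {f : ℕ × ℕ} :
    (D.cap B y (y, b)).isWEdge f ↔ f = (y, b) ∨ f.1 ∈ B ∧ D.isWEdge f := by
  rw [← Prod.swap_swap f, ← DG.isEEdge_reverse, DG.reverse_cap, Prod.swap_prod_mk,
    S.east.isEEdge_cap_iff, DG.isEEdge_reverse, Prod.swap_swap, Prod.snd_swap,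
    Prod.swap_eq_iff_eq_swap, Prod.swap_prod_mk]

theorem cut_eq (S : IsSplit D a b A B x y)
    (hD : ∀ e ∈ D.edges, e.1 ∈ D.verts ∧ e.2 ∈ D.verts) :
    DG.cut (D.cap A x (a, x)) (D.cap B y (y, b)) (a, x) (y, b) = D := by
  have hverts : (DG.cut (D.cap A x (a, x)) (D.cap B y (y, b)) (a, x) (y, b)).verts = D.verts := by
    ext v
    have hxy : v ∈ D.verts → v ≠ x ∧ v ≠ y := fun hv =>
      ⟨fun h => S.west.fresh (h ▸ hv), fun h => S.east.fresh (h ▸ hv)⟩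
    simp only [DG.cut, Finset.mem_sdiff, Finset.mem_union, DG.mem_verts_cap, Finset.mem_insert,
      Finset.mem_singleton]
    rw [← S.union, Finset.mem_union] at hxy ⊢
    tauto
  have hedges : (DG.cut (D.cap A x (a, x)) (D.cap B y (y, b)) (a, x) (y, b)).edges = D.edges := by
    ext g
    simp only [DG.cut, Finset.mem_insert, Finset.mem_union, Finset.mem_erase]
    constructor
    · rintro (rfl | ⟨hne, h⟩ | ⟨hne, h⟩)
      · exact S.west.isInnerEdge.1
      · exact ((DG.mem_edges_cap.1 h).resolve_left hne).1
      · exact ((DG.mem_edges_cap.1 h).resolve_left hne).1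
    · refine fun hg => or_iff_not_imp_left.2 fun hab => ?_
      rcases S.mem_or_mem (hD g hg).1 with hA | hB
      · refine .inl ⟨?_, S.west.mem_cap_of_ne hg hab (.inl hA)⟩
        rintro rfl
        exact S.west.fresh (hD _ hg).2
      · refine .inr ⟨?_, S.mem_east_of_ne hg hab hB⟩
        rintro rfl
        exact S.east.fresh (hD _ hg).1
  cases D
  exact congrArg₂ DG.mk hverts hedges

theorem disjoint_verts (S : IsSplit D a b A B x y) :
    Disjoint (D.cap A x (a, x)).verts (D.cap B y (y, b)).verts := by
  simp only [DG.cap, Finset.disjoint_insert_left, Finset.disjoint_insert_right, Finset.mem_insert,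
    not_or]
  exact ⟨⟨S.ne.symm, fun hy => S.east.fresh (S.west.subset hy)⟩,
    fun hx => S.west.fresh (S.east.subset hx), S.disjoint⟩

end IsSplit

/-- The distinguished edges that (XYD) assigns to a cut. -/
def cutDist (δW δE : DistE) (eW eE : ℕ × ℕ) : DistE
  | Y, .W => if eE = δE Y .W then δW Y .W else δE Y .W
  | Y, .E => if eW = δW Y .E then δE Y .E else δW Y .E

theorem cutDist_west {eW eE : ℕ × ℕ} {Y : YDir} :
    cutDist δW δE eW eE Y .W = if eE = δE Y .W then δW Y .W else δE Y .W := rfl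

theorem cutDist_east {eW eE : ℕ × ℕ} {Y : YDir} :
    cutDist δW δE eW eE Y .E = if eW = δW Y .E then δE Y .E else δW Y .E := rfl

theorem reverse_cutDist {eW eE : ℕ × ℕ} :
    (cutDist δW δE eW eE).reverse = cutDist δE.reverse δW.reverse eE.swap eW.swap := by
  funext Y X
  cases X <;> simp only [cutDist, DistE.reverse, XDir.other, apply_ite Prod.swap, Prod.swap_inj]

/-- A splitting both of whose halves carry a marking. -/
structure IsMarkedSplit (D : DG) (L : Lab) (a b : ℕ) (A B : Finset ℕ) (x y : ℕ)
    (δW δE : DistE) : Prop extends IsSplit D a b A B x y where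
  markingW : IsMarking (D.cap A x (a, x)) (L.relabel (a, b) (a, x)) δW
  markingE : IsMarking (D.cap B y (y, b)) (L.relabel (a, b) (y, b)) δE

namespace IsMarkedSplit

theorem reverse (M : IsMarkedSplit D L a b A B x y δW δE) :
    IsMarkedSplit D.reverse L.reverse b a B A y x δE.reverse δW.reverse where
  toIsSplit := M.toIsSplit.reverse
  markingW := by simpa using M.markingE.reverse
  markingE := by simpa using M.markingW.reverse

theorem eq_east_of_principal (M : IsMarkedSplit D L a b A B x y δW δE) (T : TreeCompass D L)
    {Y : YDir} (h : Principal D L Y (a, b)) : (y, b) = δE Y .W := by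
  refine M.markingE.west.eq_of_principal Y _ M.funcWEdge_east.1 ?_
  refine (M.isPiece_east T.properLab).principal ?_
  rwa [M.map_update_east]

theorem eq_west_of_principal (M : IsMarkedSplit D L a b A B x y δW δE) (T : TreeCompass D L)
    {Y : YDir} (h : Principal D.reverse L.reverse Y (b, a)) : (a, x) = δW Y .E :=
  Prod.swap_injective (M.reverse.eq_east_of_principal T.reverse h)

theorem eq_west_or_eq_east (M : IsMarkedSplit D L a b A B x y δW δE) (T : TreeCompass D L)
    (Y : YDir) : (a, x) = δW Y .E ∨ (y, b) = δE Y .W :=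
  (T.principal_or Y (a, b)).symm.imp (M.eq_west_of_principal T) (M.eq_east_of_principal T)

theorem reaches_west (M : IsMarkedSplit D L a b A B x y δW δE) (T : TreeCompass D L) (Y : YDir) :
    D.EdgeReaches (δW Y .W) (if (a, x) = δW Y .E then (a, b) else δW Y .E) := by
  have hreach := (M.west.isPiece_cap T.properLab).edgeReaches (M.markingW.reaches Y)
  rw [M.west.map_update_of_isWEdge (M.markingW.west.isWEdge Y)] at hreach
  split_ifs with h
  · rwa [← h, M.west.map_update_cap] at hreach
  · have hmem : δW Y .E ∈ (D.cap A x (a, x)).edges :=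
      DG.mem_edges_reverse.1 (M.markingW.east.isWEdge Y).1
    rwa [M.west.map_update_of_ne hmem (Ne.symm h)] at hreach

theorem reaches_east (M : IsMarkedSplit D L a b A B x y δW δE) (T : TreeCompass D L) (Y : YDir) :
    D.EdgeReaches (if (y, b) = δE Y .W then (a, b) else δE Y .W) (δE Y .E) := by
  have hreach := DG.edgeReaches_reverse.1 (M.reverse.reaches_west T.reverse Y)
  have hswap : (b, y) = δE.reverse Y .E ↔ (y, b) = δE Y .W := Prod.swap_inj (p := (y, b))
  split_ifs with h
  · rwa [if_pos (hswap.2 h)] at hreach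
  · rwa [if_neg (hswap.not.2 h)] at hreach

theorem isWMarking (M : IsMarkedSplit D L a b A B x y δW δE) (T : TreeCompass D L) :
    IsWMarking D L (cutDist δW δE (a, x) (y, b)) where
  isWEdge Y := by
    rw [cutDist_west]
    split_ifs with h
    · exact (M.west.isWEdge_cap_iff.1 (M.markingW.west.isWEdge Y)).2
    · exact ((M.isWEdge_east_iff.1 (M.markingE.west.isWEdge Y)).resolve_left (Ne.symm h)).2
  eq_of_principal Y f hf hprincipal := by
    rcases M.mem_or_mem hf.2.1 with hA | hB
    · have hfW := M.west.isWEdge_cap_iff.2 ⟨hA, hf⟩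
      have hfδ : f = δW Y .W := by
        refine M.markingW.west.eq_of_principal Y f hfW ?_
        refine (M.west.isPiece_cap T.properLab).principal ?_
        rwa [M.west.map_update_of_isWEdge hfW]
      have hδE : (y, b) = δE Y .W := by
        -- Otherwise `f` reaches `(a, b)`, which is then principal as well.
        by_contra hne
        have hreach := M.reaches_west T Y
        rw [if_pos ((M.eq_west_or_eq_east T Y).resolve_right hne), ← hfδ] at hreach
        exact hne (M.eq_east_of_principal T (hprincipal.of_reaches hreach))
      rw [cutDist_west, if_pos hδE, hfδ]
    · have hfE := M.isWEdge_east_iff.2 (.inr ⟨hB, hf⟩)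
      have hne : f ≠ (y, b) := by
        rintro rfl
        exact M.east.ne_of_mem hB rfl
      have hfδ : f = δE Y .W := by
        refine M.markingE.west.eq_of_principal Y f hfE ?_
        refine (M.isPiece_east T.properLab).principal ?_
        rwa [M.map_update_east_of_ne hfE.1 hne]
      rw [cutDist_west, if_neg (hfδ ▸ hne.symm), hfδ]

theorem reaches (M : IsMarkedSplit D L a b A B x y δW δE) (T : TreeCompass D L) (Y : YDir) :
    D.EdgeReaches (cutDist δW δE (a, x) (y, b) Y .W) (cutDist δW δE (a, x) (y, b) Y .E) := by
  have hW := M.reaches_west T Y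
  have hE := M.reaches_east T Y
  have hor := M.eq_west_or_eq_east T Y
  rw [cutDist_west, cutDist_east]
  split_ifs at * with h1 h2 h2
  · exact hW.trans hE
  · exact hW
  · exact hE
  · exact absurd hor (not_or.2 ⟨h2, h1⟩)

theorem isMarking (M : IsMarkedSplit D L a b A B x y δW δE) (T : TreeCompass D L) :
    IsMarking D L (cutDist δW δE (a, x) (y, b)) where
  west := M.isWMarking T
  east := reverse_cutDist ▸ M.reverse.isWMarking T.reverse
  reaches := M.reaches T

end IsMarkedSplit

end Split

section Realization

variable {D : DG} {L : Lab} {GW GE : CTree} {a b x y : ℕ} {A B : Finset ℕ}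

/-- `G` is a construction of `D` with `λ(G) = ⟨D, L⟩`. The marking is what the induction needs to
verify (XYC). -/
structure Realizes (D : DG) (L : Lab) (G : CTree) : Prop where
  isConstruction : IsConstruction G
  rootGraph : G.rootGraph = D
  lamG : ∀ v, D.isInner v → ∀ Y X, lamG G v Y X = L v Y X
  isMarking : IsMarking D L G.dist

theorem TreeCompass.realizes_leaf (T : TreeCompass D L) (hD : ∀ e, ¬ D.isInnerEdge e)
    (hb : D.isInner b) : Realizes D L (.leaf D (L b)) where
  isConstruction := .leaf _ _ (T.isBasicK hD hb)
  rootGraph := rfl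
  lamG v hv Y X := by
    obtain rfl | hvb | hbv := T.adj_of_no_innerEdge hD hb hv.1
    · rfl
    · exact absurd ⟨hvb, hv, hb⟩ (hD (v, b))
    · exact absurd ⟨hbv, hb, hv⟩ (hD (b, v))
  isMarking := T.isMarking hD hb

theorem Lab.ite_relabel {e e' eW eE : ℕ × ℕ} {v : ℕ} {Y : YDir} {X : XDir}
    (hW : L v Y X ≠ eW) (hE : L v Y X ≠ eE) (he' : e' = eW ∨ e' = eE) :
    (if L.relabel e e' v Y X = eW ∨ L.relabel e e' v Y X = eE then e else L.relabel e e' v Y X) =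
      L v Y X := by
  by_cases h : L v Y X = e
  · rw [relabel, if_pos h, if_pos he', h]
  · rw [relabel, if_neg h, if_neg (not_or.2 ⟨hW, hE⟩)]

theorem IsSplit.lamG_mkNode (S : IsSplit D a b A B x y) (T : TreeCompass D L)
    (hW : Realizes (D.cap A x (a, x)) (L.relabel (a, b) (a, x)) GW)
    (hE : Realizes (D.cap B y (y, b)) (L.relabel (a, b) (y, b)) GE) {v : ℕ} (hv : D.isInner v)
    (Y : YDir) (X : XDir) : lamG (mkNode GW GE (a, x) (y, b)) v Y X = L v Y X := by
  have hmem := T.mem_verts _ (T.properLab.mem_edges hv Y X)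
  have hx : L v Y X ≠ (a, x) := fun h => S.west.fresh (by simpa [h] using hmem.2)
  have hy : L v Y X ≠ (y, b) := fun h => S.east.fresh (by simpa [h] using hmem.1)
  have hvx : v ≠ x := fun h => S.west.fresh (h ▸ hv.1)
  simp only [mkNode, lamG, hW.rootGraph, DG.mem_verts_cap, hvx, false_or]
  by_cases hA : v ∈ A
  · simp only [hA, if_true, hW.lamG v (S.west.isInner_cap_iff.2 ⟨hA, hv⟩)]
    exact Lab.ite_relabel hx hy (.inl rfl)
  · simp only [hA, if_false, hE.lamG v (S.isInner_east ((S.mem_or_mem hv.1).resolve_left hA) hv)]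
    exact Lab.ite_relabel hx hy (.inr rfl)

theorem IsSplit.realizes_mkNode (S : IsSplit D a b A B x y) (T : TreeCompass D L)
    (hW : Realizes (D.cap A x (a, x)) (L.relabel (a, b) (a, x)) GW)
    (hE : Realizes (D.cap B y (y, b)) (L.relabel (a, b) (y, b)) GE) :
    Realizes D L (mkNode GW GE (a, x) (y, b)) := by
  have M : IsMarkedSplit D L a b A B x y GW.dist GE.dist := ⟨S, hW.isMarking, hE.isMarking⟩
  have hdist : (mkNode GW GE (a, x) (y, b)).dist = cutDist GW.dist GE.dist (a, x) (y, b) := by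
    funext Y X
    cases X <;> rfl
  refine ⟨?_, ?_, fun _ => S.lamG_mkNode T hW hE, hdist ▸ M.isMarking T⟩
  · refine .node _ _ _ _ _ _ hW.isConstruction hE.isConstruction ?_ ?_ ?_ rfl
      (M.eq_west_or_eq_east T) (fun _ => rfl) (fun _ => rfl)
    · rw [hW.rootGraph, hE.rootGraph]
      exact S.disjoint_verts
    · rw [hW.rootGraph]
      exact S.west.funcEEdge_cap
    · rw [hE.rootGraph]
      exact S.funcWEdge_east
  · change DG.cut GW.rootGraph GE.rootGraph (a, x) (y, b) = D
    rw [hW.rootGraph, hE.rootGraph, S.cut_eq T.mem_verts]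

theorem TreeCompass.exists_realizes (T : TreeCompass D L) : ∃ G, Realizes D L G := by
  induction hn : D.edges.card using Nat.strong_induction_on generalizing D L with
  | _ n ih =>
    by_cases hD : ∃ e, D.isInnerEdge e
    · obtain ⟨⟨a, b⟩, hab⟩ := hD
      obtain ⟨A, B, x, y, S⟩ := T.exists_isSplit hab
      obtain ⟨GW, hW⟩ := ih _ (hn ▸ S.west.card_cap_lt) (S.west.treeCompass_cap T) rfl
      obtain ⟨GE, hE⟩ := ih _ (hn ▸ S.card_east_lt) (S.treeCompass_east T) rfl
      exact ⟨_, S.realizes_mkNode T hW hE⟩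
    · obtain ⟨b, hb⟩ := T.exists_inner
      exact ⟨_, T.realizes_leaf (not_exists.1 hD) hb⟩

end Realization

/-- Proposition 4.4: for every local compass graph `⟨D, L⟩` there is a
construction `G` such that `λ(G) = ⟨D, L⟩` (the labellings agreeing on the
inner vertices of `D`, where they are defined). -/
theorem prop_4_4 (D : DG) (L : Lab) (h : IsLocalCompass D L) :
    ∃ G : CTree, IsConstruction G ∧ G.rootGraph = D ∧
      ∀ a, D.isInner a → ∀ (Y : YDir) (X : XDir), lamG G a Y X = L a Y X := by
  obtain ⟨G, hG⟩ := h.treeCompass.exists_realizes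
  exact ⟨G, hG.isConstruction, hG.rootGraph, hG.lamG⟩

end PluralCuts
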